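/- arXiv:1310.4313 — 8 statements merged into one kernel-verified Lean document; each statement's English description precedes it below -/
import Mathlib

section
/- Let S be a Hausdorff topological space with an associative multiplication such that for every a ∈ S the left translation x ↦ a·x is continuous. Suppose 0 ∈ S satisfies x·0 = 0 for all x ∈ S, the set G = S ∖ {0} is closed under multiplication, and G is a group under the induced multiplication. If G, with the subspace topology, is left precompact, then 0 is an isolated point of S. -/
/-!
Separate the identity `e` and the zero `z` by disjoint open sets `U` and `V`. Precompactness
gives a finite `F ⊆ G` with `F (U ∩ G) = G`. The set of all `x` with `f⁻¹ x ∈ V` for every `f ∈ F`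
is open, being a finite intersection of preimages of `V` under left translations, and it contains
`z`. It misses `G`: if `x = f u` with `f ∈ F` and `u ∈ U`, then `f⁻¹ x = u ∉ V`.
Hence it equals `{z}`.
-/

/-- If `S` is a Hausdorff space with an associative multiplication with
continuous left translations, `z` is a right zero, `G = S \ {z}` is a subgroup, and `G`
is left precompact in the subspace topology, then `z` is an isolated point of `S`. -/
theorem stmt_0 {S : Type*} [TopologicalSpace S] [T2Space S]
    (mul : S → S → S)
    (assoc : ∀ a b c : S, mul (mul a b) c = mul a (mul b c))
    (contL : ∀ a : S, Continuous fun x => mul a x)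
    (z : S) (hz : ∀ x : S, mul x z = z)
    (G : Set S) (hG : G = {x : S | x ≠ z})
    (hGmul : ∀ x ∈ G, ∀ y ∈ G, mul x y ∈ G)
    (e : S) (he : e ∈ G)
    (hidl : ∀ x ∈ G, mul e x = x) (hidr : ∀ x ∈ G, mul x e = x)
    (hinv : ∀ x ∈ G, ∃ y ∈ G, mul x y = e ∧ mul y x = e)
    (hpre : ∀ U : Set S, U ⊆ G → U ∈ nhdsWithin e G →
      ∃ F : Set S, F ⊆ G ∧ F.Finite ∧ ∀ g ∈ G, ∃ f ∈ F, ∃ u ∈ U, g = mul f u) :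
    IsOpen ({z} : Set S) := by
  subst hG
  obtain ⟨U, V, hU, hV, heU, hzV, hUV⟩ := t2_separation (show e ≠ z from he)
  obtain ⟨F, hFG, hFfin, hF⟩ := hpre (U ∩ {x : S | x ≠ z}) Set.inter_subset_right
    (Filter.inter_mem (mem_nhdsWithin_of_mem_nhds (hU.mem_nhds heU)) self_mem_nhdsWithin)
  choose! inv _ hinv using hinv
  have hW : IsOpen (⋂ f ∈ F, (fun x => mul (inv f) x) ⁻¹' V) :=
    hFfin.isOpen_biInter fun f _ => hV.preimage (contL _)
  convert hW using 1
  ext x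
  simp only [Set.mem_singleton_iff, Set.mem_iInter, Set.mem_preimage]
  constructor
  · rintro rfl f _
    rwa [hz]
  · intro hx
    by_contra hne
    obtain ⟨f, hf, u, ⟨huU, huG⟩, rfl⟩ := hF x hne
    have huV := hx f hf
    rw [← assoc, (hinv f (hFG hf)).2, hidl u huG] at huV
    exact Set.disjoint_left.mp hUV huU huV
end

section
/- Let S be a Hausdorff topological space with an associative multiplication such that for every a ∈ S the left translation x ↦ a·x is continuous. Suppose 0 ∈ S satisfies x·0 = 0 for all x ∈ S, the set G = S ∖ {0} is closed under multiplication, and G is a group under the induced multiplication. If the multiplication of G, with the subspace topology, is jointly continuous (so G is a paratopological group) and G is pseudocompact, then 0 is an isolated point of S. -/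
/-!
Suppose `z` is not isolated. The trace `F` on `G` of the neighbourhood filter of `z` is then
proper, it is invariant under left translations of `G` (these extend to `S` and fix `z`), and it
has an open member `V` missing a neighbourhood `W` of the identity (`S` is Hausdorff). If `G` were
covered by the closures of finitely many translates `a W`, the corresponding finite intersection
of sets `a V ∈ F` would be empty; so the point is a form of precompactness of `G`.

In a topological group this is the usual argument: a sequence `x m ∈ ⋂ i < m, x i V` cannot
accumulate. Inversion need not be continuous on `G`, but pseudocompactness yields a weak
substitute, `exists_inv_mem_closure`: each neighbourhood `W` of `1` admits a neighbourhood `U` of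
`1` with `U⁻¹ ⊆ closure W`. It is obtained from Pfister's trick of accumulating the partial
products `x 0 * x 1 * ⋯ * x n` of a sequence of counterexamples tending to `1` fast, thickened to
open sets. The precompactness argument then works up to closures
(`false_of_invariant_filter`), which is harmless because `V` is open.
-/

/-- A topological space is pseudocompact if every locally finite family of non-empty
open subsets is finite. -/
def IsPseudocompact (X : Type*) [TopologicalSpace X] : Prop :=
  ∀ 𝒰 : Set (Set X), (∀ U ∈ 𝒰, IsOpen U ∧ U.Nonempty) →
    LocallyFinite (fun U : 𝒰 => (U : Set X)) → 𝒰.Finite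

open Filter Topology

/-- In a pseudocompact space every sequence of non-empty open sets has an accumulation point. -/
lemma IsPseudocompact.exists_accumulation {X : Type*} [TopologicalSpace X]
    (h : IsPseudocompact X) (P : ℕ → Set X) (ho : ∀ n, IsOpen (P n))
    (hne : ∀ n, (P n).Nonempty) :
    ∃ g : X, ∀ N ∈ 𝓝 g, {n | (P n ∩ N).Nonempty}.Infinite := by
  by_contra! hcon
  have hlf : LocallyFinite P := fun g => by
    obtain ⟨N, hN, hf⟩ := hcon g
    exact ⟨N, hN, by simpa using hf⟩
  have hfin : (Set.range P).Finite := by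
    refine h _ ?_ hlf.on_range
    rintro _ ⟨n, rfl⟩
    exact ⟨ho n, hne n⟩
  -- Some set occurs infinitely often in the sequence, and its points contradict local finiteness.
  have : Finite (Set.range P) := hfin
  obtain ⟨⟨_, k, rfl⟩, hk⟩ := Finite.exists_infinite_fiber (Set.rangeFactorization P)
  rw [Set.infinite_coe_iff] at hk
  obtain ⟨g, hg⟩ := hne k
  refine hk ((hlf.point_finite g).subset fun n hn => ?_)
  have : P n = P k := congrArg Subtype.val hn
  simpa [this] using hg

section Group

variable {G : Type*} [Group G] [TopologicalSpace G] [ContinuousMul G]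

/-- A weak continuity of the inversion in a pseudocompact paratopological group. -/
lemma exists_inv_mem_closure (h : IsPseudocompact G) {W : Set G} (hW : W ∈ 𝓝 (1 : G)) :
    ∃ U ∈ 𝓝 (1 : G), ∀ u ∈ U, u⁻¹ ∈ closure W := by
  by_contra! hcon
  have step : ∀ U : {s : Set G // IsOpen s ∧ (1 : G) ∈ s},
      ∃ V : {s : Set G // IsOpen s ∧ (1 : G) ∈ s}, ∀ a ∈ V.1, ∀ b ∈ V.1, a * b ∈ U.1 := by
    intro U
    obtain ⟨V, hVo, hV1, hV⟩ := exists_open_nhds_one_mul_subset (U.2.1.mem_nhds U.2.2)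
    exact ⟨⟨V, hVo, hV1⟩, fun a ha b hb => hV (Set.mul_mem_mul ha hb)⟩
  choose nxt hnxt using step
  obtain ⟨V0, hV0W, hV0o, hV01⟩ := mem_nhds_iff.1 hW
  let V' : ℕ → {s : Set G // IsOpen s ∧ (1 : G) ∈ s} :=
    fun n => Nat.rec ⟨V0, hV0o, hV01⟩ (fun _ U => nxt U) n
  let V : ℕ → Set G := fun n => (V' n).1
  have hVo : ∀ n, IsOpen (V n) := fun n => (V' n).2.1
  have hV1 : ∀ n, (1 : G) ∈ V n := fun n => (V' n).2.2
  have hVm : ∀ n, ∀ a ∈ V (n + 1), ∀ b ∈ V (n + 1), a * b ∈ V n := fun n => hnxt (V' n)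
  have hanti : Antitone V := antitone_nat_of_succ_le fun n a ha => by
    simpa using hVm n a ha 1 (hV1 (n + 1))
  choose x hxV hxW using fun n => hcon (V (n + 1)) ((hVo (n + 1)).mem_nhds (hV1 (n + 1)))
  -- `y n` is the product `x 0 * ⋯ * x (n - 1)`.
  let y : ℕ → G := fun n => Nat.rec 1 (fun k a => a * x k) n
  have hy : ∀ n, y (n + 1) = y n * x n := fun n => rfl
  have htail : ∀ n k, ∀ v ∈ V (n + k), (y n)⁻¹ * (y (n + k) * v) ∈ V n := by
    intro n k
    induction k with
    | zero => intro v hv; simpa using hv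
    | succ k ih =>
      intro v hv
      have := ih (x (n + k) * v) (hVm _ _ (hxV _) _ hv)
      rwa [← mul_assoc (y (n + k)), ← hy] at this
  -- The neighbourhood `y n * N n` of `y n`, where `x n⁻¹ * N n` avoids `closure W`.
  let O : ℕ → Set G := fun n =>
    {a | (y n)⁻¹ * a ∈ V n ∧ (x n)⁻¹ * ((y n)⁻¹ * a) ∈ (closure W)ᶜ}
  have hOo : ∀ n, IsOpen (O n) := fun n =>
    ((hVo n).preimage (by fun_prop : Continuous fun a : G => (y n)⁻¹ * a)).inter
      (isClosed_closure.isOpen_compl.preimage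
        (by fun_prop : Continuous fun a : G => (x n)⁻¹ * ((y n)⁻¹ * a)))
  have hOne : ∀ n, (O n).Nonempty := fun n =>
    ⟨y n, by simpa using hV1 n, by simpa using hxW n⟩
  obtain ⟨g, hg⟩ := h.exists_accumulation O hOo hOne
  have hgc : ∀ n, (y n)⁻¹ * g ∈ closure (V n) := by
    intro n
    rw [mem_closure_iff_nhds]
    intro N hN
    have hN' : (fun a : G => (y n)⁻¹ * a) ⁻¹' N ∈ 𝓝 g :=
      (by fun_prop : Continuous fun a : G => (y n)⁻¹ * a).continuousAt.preimage_mem_nhds hN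
    obtain ⟨m, ⟨p, hpO, hpN⟩, hm⟩ := (hg _ hN').exists_gt n
    obtain ⟨k, rfl⟩ := Nat.exists_eq_add_of_le hm.le
    exact ⟨(y n)⁻¹ * p, hpN, by simpa using htail n k _ hpO.1⟩
  have hgN : (fun a : G => g⁻¹ * a) ⁻¹' (V 1) ∈ 𝓝 g :=
    (by fun_prop : Continuous fun a : G => g⁻¹ * a).continuousAt.preimage_mem_nhds
      ((hVo 1).mem_nhds (by simpa using hV1 1))
  obtain ⟨m, p, hpO, hpV⟩ := (hg _ hgN).nonempty
  -- `x m⁻¹ * (y m⁻¹ * p)` is the product of `y (m + 1)⁻¹ * g ∈ closure (V 1)` and `g⁻¹ * p ∈ V 1`.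
  refine hpO.2 ?_
  have ht : (y (m + 1))⁻¹ * g ∈ closure (V 1) := closure_mono (hanti (Nat.le_add_left 1 m)) (hgc (m + 1))
  have hmem := map_mem_closure (by fun_prop : Continuous fun c : G => c * (g⁻¹ * p)) ht
    (t := W) fun c hc => hV0W (hVm 0 c hc _ hpV)
  convert hmem using 1
  rw [hy]
  group

/-- A proper left-invariant filter on a pseudocompact paratopological group has no open member
missing a neighbourhood of the identity. -/
lemma false_of_invariant_filter (h : IsPseudocompact G) (F : Filter G) [F.NeBot]
    (hF : ∀ a : G, Tendsto (fun x => a * x) F F) {V W : Set G} (hVo : IsOpen V) (hV : V ∈ F)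
    (hW : W ∈ 𝓝 (1 : G)) (hd : Disjoint V W) : False := by
  obtain ⟨W₁, hW₁o, hW₁1, hW₁⟩ := exists_open_nhds_one_mul_subset hW
  obtain ⟨W₂, hW₂o, hW₂1, hW₂⟩ := exists_open_nhds_one_mul_subset (hW₁o.mem_nhds hW₁1)
  have hW₂W₁ : W₂ ⊆ W₁ := fun a ha => by simpa using hW₂ (Set.mul_mem_mul ha hW₂1)
  obtain ⟨U', hU', hinv⟩ := exists_inv_mem_closure h (hW₂o.mem_nhds hW₂1)
  obtain ⟨U, hUsub, hUo, hU1⟩ := mem_nhds_iff.1 (inter_mem hU' (hW₂o.mem_nhds hW₂1))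
  obtain ⟨x, -, hx⟩ := exists_seq_of_forall_finset_exists (fun _ : G => True)
    (fun a b => a⁻¹ * b ∈ V) fun s _ => by
      have : (⋂ a ∈ s, (fun b : G => a⁻¹ * b) ⁻¹' V) ∈ F :=
        (biInter_finset_mem s).2 fun a _ => hF a⁻¹ hV
      obtain ⟨b, hb⟩ := nonempty_of_mem this
      exact ⟨b, trivial, by simpa using hb⟩
  let P : ℕ → Set G := fun m =>
    (⋂ i ∈ Finset.range m, (fun b : G => (x i)⁻¹ * b) ⁻¹' V) ∩ (fun b : G => (x m)⁻¹ * b) ⁻¹' U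
  have hPo : ∀ m, IsOpen (P m) := fun m =>
    (isOpen_biInter_finset fun i _ => hVo.preimage (by fun_prop)).inter
      (hUo.preimage (by fun_prop))
  have hPne : ∀ m, (P m).Nonempty := fun m =>
    ⟨x m, by simpa using fun i hi => hx i m hi, by simpa using hU1⟩
  obtain ⟨g, hg⟩ := h.exists_accumulation P hPo hPne
  have hgN : (fun a : G => g⁻¹ * a) ⁻¹' U ∈ 𝓝 g :=
    (by fun_prop : Continuous fun a : G => g⁻¹ * a).continuousAt.preimage_mem_nhds
      (hUo.mem_nhds (by simpa using hU1))
  obtain ⟨n, p, hpP, hpU⟩ := (hg _ hgN).nonempty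
  obtain ⟨m, ⟨q, hqP, hqU⟩, hnm⟩ := (hg _ hgN).exists_gt n
  have hqV : (x n)⁻¹ * q ∈ V := Set.mem_iInter₂.1 hqP.1 n (Finset.mem_range.2 hnm)
  -- `x n⁻¹ * q = (x n⁻¹ * p) * (g⁻¹ * p)⁻¹ * (g⁻¹ * q)` lies in `W₂ * closure W₂ * W₂`.
  have hmem := map_mem_closure
    (by fun_prop : Continuous fun c : G => ((x n)⁻¹ * p) * c * (g⁻¹ * q))
    (hinv _ (hUsub hpU).1) (t := W) fun c hc =>
      hW₁ (Set.mul_mem_mul (hW₂ (Set.mul_mem_mul (hUsub hpP.2).2 hc))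
        (hW₂W₁ (hUsub hqU).2))
  refine Set.disjoint_left.1 (hd.closure_right hVo) hqV ?_
  convert hmem using 1
  group

end Group

/-- If `S` is a Hausdorff space with an associative multiplication with
continuous left translations, `z` is a right zero, `G = S \ {z}` is a subgroup whose
multiplication is jointly continuous in the subspace topology (a paratopological group)
and which is pseudocompact, then `z` is an isolated point of `S`. -/
theorem stmt_1 {S : Type*} [TopologicalSpace S] [T2Space S]
    (mul : S → S → S)
    (assoc : ∀ a b c : S, mul (mul a b) c = mul a (mul b c))
    (contL : ∀ a : S, Continuous fun x => mul a x)
    (z : S) (hz : ∀ x : S, mul x z = z)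
    (G : Set S) (hG : G = {x : S | x ≠ z})
    (hGmul : ∀ x ∈ G, ∀ y ∈ G, mul x y ∈ G)
    (e : S) (he : e ∈ G)
    (hidl : ∀ x ∈ G, mul e x = x) (hidr : ∀ x ∈ G, mul x e = x)
    (hinv : ∀ x ∈ G, ∃ y ∈ G, mul x y = e ∧ mul y x = e)
    (hjoint : Continuous fun p : G × G => mul (p.1 : S) (p.2 : S))
    (hpc : IsPseudocompact ↥G) :
    IsOpen ({z} : Set S) := by
  by_contra hiso
  have hmemG : ∀ x, x ∈ G ↔ x ≠ z := fun x => by rw [hG]; rfl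
  choose inv hinvG hinvr hinvl using hinv
  let _ : Group G :=
    { mul := fun a b => ⟨mul a b, hGmul _ a.2 _ b.2⟩
      one := ⟨e, he⟩
      inv := fun a => ⟨inv a a.2, hinvG _ _⟩
      mul_assoc := fun a b c => Subtype.ext (assoc _ _ _)
      one_mul := fun a => Subtype.ext (hidl _ a.2)
      mul_one := fun a => Subtype.ext (hidr _ a.2)
      inv_mul_cancel := fun a => Subtype.ext (hinvl _ a.2) }
  have _ : ContinuousMul G := ⟨hjoint.subtype_mk _⟩
  have hne : (comap ((↑) : G → S) (𝓝 z)).NeBot := by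
    rw [comap_neBot_iff]
    intro t ht
    by_contra! hcon
    refine hiso (isOpen_singleton_iff_nhds_eq_pure z |>.2 (le_antisymm ?_ (pure_le_nhds z)))
    refine le_pure_iff.2 (mem_of_superset ht fun s hs => ?_)
    by_contra hsz
    exact hcon ⟨s, (hmemG s).2 hsz⟩ hs
  obtain ⟨A, B, hAo, hBo, hzA, heB, hAB⟩ := t2_separation ((hmemG e).1 he).symm
  refine false_of_invariant_filter hpc (comap ((↑) : G → S) (𝓝 z)) (fun a => ?_)
    (hAo.preimage continuous_subtype_val) (preimage_mem_comap (hAo.mem_nhds hzA))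
    ((hBo.preimage continuous_subtype_val).mem_nhds (show (1 : G) ∈ _ from heB))
    (hAB.preimage _)
  rw [tendsto_comap_iff]
  have hlim : Tendsto (fun s => mul (a : S) s) (𝓝 z) (𝓝 z) := by
    simpa [hz] using (contL (a : S)).tendsto z
  exact hlim.comp tendsto_comap
end

section
/- Let S be a Hausdorff topological space with an associative multiplication such that for every a ∈ S the left translation x ↦ a·x is continuous. Suppose 0 ∈ S satisfies x·0 = 0 for all x ∈ S, the set G = S ∖ {0} is closed under multiplication, and G is a group under the induced multiplication. If G, with the subspace topology, is left ω-precompact and pseudocompact, then 0 is an isolated point of S. -/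
/-- If `S` is a Hausdorff space with an associative multiplication with
continuous left translations, `z` is a right zero, `G = S \ {z}` is a subgroup which,
in the subspace topology, is left ω-precompact and pseudocompact, then `z` is an
isolated point of `S`. -/
theorem stmt_2 {S : Type*} [TopologicalSpace S] [T2Space S]
    (mul : S → S → S)
    (assoc : ∀ a b c : S, mul (mul a b) c = mul a (mul b c))
    (contL : ∀ a : S, Continuous fun x => mul a x)
    (z : S) (hz : ∀ x : S, mul x z = z)
    (G : Set S) (hG : G = {x : S | x ≠ z})
    (hGmul : ∀ x ∈ G, ∀ y ∈ G, mul x y ∈ G)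
    (e : S) (he : e ∈ G)
    (hidl : ∀ x ∈ G, mul e x = x) (hidr : ∀ x ∈ G, mul x e = x)
    (hinv : ∀ x ∈ G, ∃ y ∈ G, mul x y = e ∧ mul y x = e)
    (hpre : ∀ U : Set S, U ⊆ G → U ∈ nhdsWithin e G →
      ∃ C : Set S, C ⊆ G ∧ C.Countable ∧ ∀ g ∈ G, ∃ c ∈ C, ∃ u ∈ U, g = mul c u)
    (hpc : IsPseudocompact ↥G) :
    IsOpen ({z} : Set S) := by
  by_contra hno
  have hS : ∀ x, x ∈ G ↔ x ≠ z := by intro x; rw [hG]; rfl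
  obtain ⟨U, V, hU, hV, heU, hzV, hUV⟩ := t2_separation ((hS e).1 he)
  obtain ⟨C, hCG, hCc, hC⟩ := hpre (U ∩ G) Set.inter_subset_right
    (Filter.inter_mem (mem_nhdsWithin_of_mem_nhds (hU.mem_nhds heU)) self_mem_nhdsWithin)
  have hCne : C.Nonempty := by
    obtain ⟨c, hc, _⟩ := hC e he
    exact ⟨c, hc⟩
  obtain ⟨c, rfl⟩ := hCc.exists_eq_range hCne
  have hcG : ∀ n, c n ∈ G := fun n => hCG ⟨n, rfl⟩
  choose d hdG _ hd using fun n => hinv (c n) (hcG n)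
  -- The translate `c n * U` is encoded as the preimage of `U` under left translation by `d n`,
  -- the inverse of `c n`; likewise for `V`.
  have hcov : ∀ g ∈ G, ∃ n, mul (d n) g ∈ U := by
    intro g hg
    obtain ⟨_, ⟨n, rfl⟩, u, ⟨huU, huG⟩, rfl⟩ := hC g hg
    refine ⟨n, ?_⟩
    rw [← assoc, hd, hidl u huG]
    exact huU
  let W : ℕ → Set S := fun n => ⋂ k ∈ Set.Iic n, {x | mul (d k) x ∈ V}
  have hWo : ∀ n, IsOpen (W n) := fun n =>
    (Set.finite_Iic n).isOpen_biInter fun k _ => hV.preimage (contL (d k))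
  have hzW : ∀ n, z ∈ W n := fun n => by
    simp only [W, Set.mem_iInter, Set.mem_setOf_eq, hz]
    exact fun _ _ => hzV
  have hWd : ∀ n m, n ≤ m → ∀ x ∈ W m, mul (d n) x ∉ U := by
    intro n m hnm x hx hxU
    simp only [W, Set.mem_iInter] at hx
    exact Set.disjoint_left.1 hUV hxU (hx n hnm)
  let T : ℕ → Set G := fun n => Subtype.val ⁻¹' W n
  have hTo : ∀ n, IsOpen (T n) := fun n => (hWo n).preimage continuous_subtype_val
  have hTne : ∀ n, (T n).Nonempty := by
    intro n
    by_contra hne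
    apply hno
    have hWz : W n = {z} := by
      refine Set.Subset.antisymm (fun x hx => ?_) (Set.singleton_subset_iff.2 (hzW n))
      by_contra hxz
      exact hne ⟨⟨x, (hS x).2 hxz⟩, hx⟩
    exact hWz ▸ hWo n
  have hfin : (Set.range T).Finite := by
    refine hpc _ (by rintro _ ⟨n, rfl⟩; exact ⟨hTo n, hTne n⟩) fun x => ?_
    obtain ⟨n, hn⟩ := hcov x x.2
    refine ⟨{y : G | mul (d n) y ∈ U},
      (hU.preimage ((contL (d n)).comp continuous_subtype_val)).mem_nhds hn, ?_⟩
    refine (((Set.finite_Iio n).image T).preimage Subtype.val_injective.injOn).subset ?_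
    rintro ⟨_, m, rfl⟩ ⟨y, hyT, hyU⟩
    refine ⟨m, ?_, rfl⟩
    by_contra hm
    exact hWd n m (not_lt.1 hm) y hyT hyU
  -- Each member of the family contains a point which eventually leaves the `T m`, so it occurs
  -- only finitely often in the sequence; this contradicts finiteness of the range.
  have hev : ∀ A ∈ Set.range T, ∀ᶠ m in Filter.atTop, T m ≠ A := by
    rintro _ ⟨k, rfl⟩
    obtain ⟨x, hx⟩ := hTne k
    obtain ⟨n, hn⟩ := hcov x x.2
    filter_upwards [Filter.eventually_ge_atTop n] with m hm h
    exact hWd n m hm x (show x ∈ T m from h ▸ hx) hn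
  obtain ⟨m, hm⟩ := ((Filter.eventually_all_finite hfin).2 hev).exists
  exact hm (T m) ⟨m, rfl⟩ rfl
end

section
/- Let S be a Hausdorff topological space with a jointly continuous associative multiplication (a topological semigroup). Suppose 0 ∈ S satisfies x·0 = 0 for all x ∈ S, the set G = S ∖ {0} is closed under multiplication, and G is a group under the induced multiplication. If S is pseudocompact, then 0 is an isolated point of S. -/
open Topology Filter

theorem exists_cluster {X : Type*} [TopologicalSpace X] (hpc : IsPseudocompact X)
    (A : ℕ → Set X) (hA : ∀ n, IsOpen (A n)) (hne : ∀ n, (A n).Nonempty) :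
    ∃ x, ∀ O ∈ 𝓝 x, {n | (A n ∩ O).Nonempty}.Infinite := by
  by_cases hfin : (Set.range A).Finite
  · -- Some value of `A` is taken infinitely often; any of its points will do.
    obtain ⟨n₀, hn₀⟩ : ∃ n₀, {n | A n = A n₀}.Infinite := by
      by_contra! hcon
      have : (⋃ U ∈ Set.range A, {n | A n = U}).Finite := by
        refine hfin.biUnion ?_
        rintro _ ⟨n, rfl⟩
        exact hcon n
      refine Set.infinite_univ (α := ℕ) (this.subset ?_)
      intro n _
      simp
    obtain ⟨x, hx⟩ := hne n₀
    refine ⟨x, fun O hO => hn₀.mono ?_⟩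
    intro n hn
    have hn : A n = A n₀ := hn
    exact ⟨x, hn ▸ hx, mem_of_mem_nhds hO⟩
  · by_contra! hcon
    refine hfin (hpc (Set.range A) ?_ ?_)
    · rintro _ ⟨n, rfl⟩
      exact ⟨hA n, hne n⟩
    · intro x
      obtain ⟨O, hO, hf⟩ := hcon x
      refine ⟨O, hO, ?_⟩
      refine Set.Finite.subset
        (hf.image fun n => (⟨A n, Set.mem_range_self n⟩ : Set.range A)) ?_
      rintro ⟨_, n, rfl⟩ hn
      exact ⟨n, hn, rfl⟩

section GroupWithZero

variable {S : Type*} [GroupWithZero S] [TopologicalSpace S] [T2Space S] [ContinuousMul S]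

/-- A substitute for continuity of inversion at `1`. -/
theorem eventually_inv_mem_closure (hpc : IsPseudocompact S) (U : Set S) (hU : U ∈ 𝓝 (1 : S)) :
    ∀ᶠ h in 𝓝 (1 : S), h⁻¹ ∈ closure U := by
  by_contra hcon
  have hfreq : ∃ᶠ h in 𝓝 (1 : S), h⁻¹ ∉ closure U := not_eventually.mp hcon
  obtain ⟨P, Q, hP, hQ, h0P, h1Q, hPQ⟩ := t2_separation (zero_ne_one (α := S))
  have half : ∀ W : Set S, ∃ V : Set S, W ∈ 𝓝 (1 : S) →
      IsOpen V ∧ 1 ∈ V ∧ ∀ a ∈ V, ∀ b ∈ V, a * b ∈ W := by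
    intro W
    by_cases hW : W ∈ 𝓝 (1 : S)
    · obtain ⟨V, h1, h2, h3⟩ := exists_open_nhds_one_mul_subset hW
      exact ⟨V, fun _ => ⟨h1, h2, fun a ha b hb => h3 (Set.mul_mem_mul ha hb)⟩⟩
    · exact ⟨∅, fun h => absurd h hW⟩
  choose f hf using half
  have hW0 : U ∩ Q ∈ 𝓝 (1 : S) := inter_mem hU (hQ.mem_nhds h1Q)
  let V : ℕ → Set S := fun n => f^[n + 1] (U ∩ Q)
  have Vsucc : ∀ n, V (n + 1) = f (V n) := fun n => Function.iterate_succ_apply' f (n + 1) _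
  have Vnhds : ∀ n, IsOpen (V n) ∧ (1 : S) ∈ V n := by
    intro n
    induction n with
    | zero => exact ⟨(hf _ hW0).1, (hf _ hW0).2.1⟩
    | succ n ih =>
      rw [Vsucc]
      have := hf _ (ih.1.mem_nhds ih.2)
      exact ⟨this.1, this.2.1⟩
  have Vmul : ∀ n, ∀ a ∈ V (n + 1), ∀ b ∈ V (n + 1), a * b ∈ V n := by
    intro n
    rw [Vsucc]
    exact (hf _ ((Vnhds n).1.mem_nhds (Vnhds n).2)).2.2
  have V0mul : ∀ a ∈ V 0, ∀ b ∈ V 0, a * b ∈ U ∩ Q := (hf _ hW0).2.2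
  have Vanti : Antitone V := antitone_nat_of_succ_le fun n a ha => by
    simpa using Vmul n a ha 1 (Vnhds (n + 1)).2
  have hex : ∀ n, ∃ h : S, h⁻¹ ∉ closure U ∧ h ∈ V (n + 1) ∧ h ≠ 0 := by
    intro n
    have h1 : ∀ᶠ h in 𝓝 (1 : S), h ∈ V (n + 1) ∧ h ≠ 0 :=
      ((Vnhds (n + 1)).1.eventually_mem (Vnhds (n + 1)).2).and
        (isOpen_ne.eventually_mem (one_ne_zero (α := S)))
    exact (hfreq.and_eventually h1).exists
  choose h hhU hhV hh0 using hex
  let y : ℕ → S := fun n => Nat.rec 1 (fun k a => a * h k) n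
  have y0 : y 0 = 1 := rfl
  have ysucc : ∀ n, y (n + 1) = y n * h n := fun n => rfl
  have yne : ∀ n, y n ≠ 0 := by
    intro n
    induction n with
    | zero => rw [y0]; exact one_ne_zero
    | succ n ih => rw [ysucc]; exact mul_ne_zero ih (hh0 n)
  let A : ℕ → Set S := fun n => {s | (y n)⁻¹ * s ∈ V n}
  have Aanti : Antitone A := antitone_nat_of_succ_le fun n s hs => by
    have hs : (y (n + 1))⁻¹ * s ∈ V (n + 1) := hs
    have := Vmul n _ (hhV n) _ hs
    rw [ysucc, mul_inv_rev, mul_assoc, mul_inv_cancel_left₀ (hh0 n)] at this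
    exact this
  -- Inside `A m` keep only the points so close to `y m` that they stay off
  -- `y (m + 1) * closure U`; this is possible as `(h m)⁻¹ ∉ closure U`.
  let B : ℕ → Set S := fun n => {s | s ∈ A n ∧ (h n)⁻¹ * ((y n)⁻¹ * s) ∈ (closure U)ᶜ}
  have Bopen : ∀ n, IsOpen (B n) := fun n =>
    ((Vnhds n).1.preimage (by fun_prop : Continuous fun s => (y n)⁻¹ * s)).inter
      (isClosed_closure.isOpen_compl.preimage
        (by fun_prop : Continuous fun s => (h n)⁻¹ * ((y n)⁻¹ * s)))
  have Bne : ∀ n, (B n).Nonempty := by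
    intro n
    refine ⟨y n, ?_, ?_⟩
    · change (y n)⁻¹ * y n ∈ V n
      rw [inv_mul_cancel₀ (yne n)]
      exact (Vnhds n).2
    · rw [inv_mul_cancel₀ (yne n), mul_one]
      exact hhU n
  obtain ⟨x, hx⟩ := exists_cluster hpc B Bopen Bne
  have hxA : ∀ n, x ∈ closure (A n) := by
    intro n
    rw [mem_closure_iff_nhds]
    intro O hO
    obtain ⟨k, ⟨s, hsB, hsO⟩, hk⟩ := (hx O hO).exists_gt n
    exact ⟨s, hsO, Aanti hk.le hsB.1⟩
  have hx0 : x ≠ 0 := by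
    rintro rfl
    obtain ⟨k, s, hsB, hsO⟩ := (hx P (hP.mem_nhds h0P)).nonempty
    have hs0 : (y 0)⁻¹ * s ∈ V 0 := Aanti (Nat.zero_le k) hsB.1
    have := V0mul _ hs0 1 (Vnhds 0).2
    rw [y0, inv_one, one_mul, mul_one] at this
    exact Set.disjoint_left.mp hPQ hsO this.2
  have hO : {s | x⁻¹ * s ∈ V 0} ∈ 𝓝 x := by
    refine ((Vnhds 0).1.preimage (by fun_prop : Continuous fun s => x⁻¹ * s)).mem_nhds ?_
    change x⁻¹ * x ∈ V 0
    rw [inv_mul_cancel₀ hx0]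
    exact (Vnhds 0).2
  obtain ⟨m, s, hsB, hsO⟩ := (hx _ hO).nonempty
  refine hsB.2 ?_
  have key : (y (m + 1))⁻¹ * x * (x⁻¹ * s) ∈ closure U := by
    refine map_mem_closure (f := fun t => (y (m + 1))⁻¹ * t * (x⁻¹ * s)) (by fun_prop)
      (hxA (m + 1)) ?_
    intro t ht
    exact (V0mul _ (Vanti (Nat.zero_le (m + 1)) ht) _ hsO).1
  rwa [mul_assoc, mul_inv_cancel_left₀ hx0, ysucc, mul_inv_rev, mul_assoc] at key

theorem isOpen_singleton_zero (hpc : IsPseudocompact S) : IsOpen ({0} : Set S) := by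
  by_contra hiso
  have hacc : ∀ W ∈ 𝓝 (0 : S), ∃ g ∈ W, g ≠ 0 := by
    intro W hW
    by_contra! hcon
    exact hiso (isOpen_singleton_iff_nhds_eq_pure (0 : S) |>.mpr
      (le_antisymm (le_pure_iff.mpr (mem_of_superset hW hcon)) (pure_le_nhds 0)))
  obtain ⟨U, Q, hU, hQ, h0U, h1Q, hUQ⟩ := t2_separation (zero_ne_one (α := S))
  have hsplit : ∀ (b : S), ∀ U ∈ 𝓝 (0 : S), ∃ W ∈ 𝓝 (0 : S), ∃ M ∈ 𝓝 b,
      ∀ w ∈ W, ∀ m ∈ M, w * m ∈ U := by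
    intro b U hU
    have : Tendsto (fun p : S × S => p.1 * p.2) (𝓝 0 ×ˢ 𝓝 b) (𝓝 0) := by
      have := (continuous_mul (M := S)).tendsto (0, b)
      rwa [nhds_prod_eq, zero_mul] at this
    obtain ⟨W, hW, M, hM, hWM⟩ := mem_prod_iff.mp (this hU)
    exact ⟨W, hW, M, hM, fun w hw m hm => hWM (Set.mk_mem_prod hw hm)⟩
  obtain ⟨W₁, hW₁, M₁, hM₁, h₁⟩ := hsplit 1 U (hU.mem_nhds h0U)
  obtain ⟨W₂, hW₂, M₂, hM₂, h₂⟩ := hsplit 1 W₁ hW₁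
  obtain ⟨W₃, hW₃, M₃, hM₃, h₃⟩ := hsplit 1 W₂ hW₂
  obtain ⟨W₄, hW₄, W₅, hW₅, h₄⟩ := hsplit 0 U (hU.mem_nhds h0U)
  let W := W₃ ∩ W₄
  have hW : W ∈ 𝓝 (0 : S) := inter_mem hW₃ hW₄
  let V := interior (M₃ ∩ Q)
  have hV1 : (1 : S) ∈ V := mem_interior_iff_mem_nhds.mpr (inter_mem hM₃ (hQ.mem_nhds h1Q))
  obtain ⟨g, hg, hgm⟩ := exists_seq_of_forall_finset_exists (fun g : S => g ∈ W ∧ g ≠ 0)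
    (fun a b => b * a⁻¹ ∈ W) (by
      intro s _
      have hev : W ∩ (⋂ a ∈ s, {b | b * a⁻¹ ∈ W}) ∈ 𝓝 (0 : S) := by
        refine inter_mem hW ((biInter_finset_mem s).mpr fun a _ => ?_)
        have : Tendsto (fun b : S => b * a⁻¹) (𝓝 0) (𝓝 0) := by
          have := (by fun_prop : Continuous fun b : S => b * a⁻¹).tendsto 0
          rwa [zero_mul] at this
        exact this hW
      obtain ⟨b, hb, hb0⟩ := hacc _ hev
      exact ⟨b, ⟨hb.1, hb0⟩, fun a ha => Set.mem_iInter₂.mp hb.2 a ha⟩)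
  obtain ⟨x, hx⟩ := exists_cluster hpc (fun n => {s | g n * s ∈ V})
    (fun n => isOpen_interior.preimage (by fun_prop : Continuous fun s => g n * s))
    (fun n => ⟨(g n)⁻¹, by
      change g n * (g n)⁻¹ ∈ V
      rwa [mul_inv_cancel₀ (hg n).2]⟩)
  have hx0 : x ≠ 0 := by
    rintro rfl
    obtain ⟨k, s, hsV, hsW⟩ := (hx W₅ hW₅).nonempty
    exact Set.disjoint_left.mp hUQ (h₄ _ (hg k).1.2 s hsW) (interior_subset hsV).2
  -- Points `p` near `1`, with `p ≠ 0` so that they are invertible.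
  have hN : ∀ᶠ p in 𝓝 (1 : S), p ≠ 0 ∧ p ∈ M₁ ∧ p⁻¹ ∈ closure M₂ :=
    (isOpen_ne.eventually_mem (one_ne_zero (α := S))).and
      ((eventually_mem_set.mpr hM₁).and (eventually_inv_mem_closure hpc M₂ hM₂))
  have hO : ∀ᶠ s in 𝓝 x, x⁻¹ * s ≠ 0 ∧ x⁻¹ * s ∈ M₁ ∧ (x⁻¹ * s)⁻¹ ∈ closure M₂ := by
    have : Tendsto (fun s : S => x⁻¹ * s) (𝓝 x) (𝓝 1) := by
      have := (by fun_prop : Continuous fun s : S => x⁻¹ * s).tendsto x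
      rwa [inv_mul_cancel₀ hx0] at this
    exact this.eventually hN
  obtain ⟨m, s, hsV, hs0, -, hsM₂⟩ := (hx _ hO).nonempty
  obtain ⟨n, ⟨t, htV, -, htM₁, -⟩, hmn⟩ := (hx _ hO).exists_gt m
  have key : (g n * (g m)⁻¹) * (g m * s) * (x⁻¹ * s)⁻¹ * (x⁻¹ * t) ∈ closure U := by
    refine map_mem_closure
      (f := fun u => (g n * (g m)⁻¹) * (g m * s) * u * (x⁻¹ * t)) (by fun_prop) hsM₂ ?_
    intro u hu
    exact h₁ _ (h₂ _ (h₃ _ (hgm m n hmn).1 _ (interior_subset hsV).1) _ hu) _ htM₁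
  have hs : s ≠ 0 := right_ne_zero_of_mul hs0
  have heq : (g n * (g m)⁻¹) * (g m * s) * (x⁻¹ * s)⁻¹ * (x⁻¹ * t) = g n * t := by
    have := (hg m).2
    rw [mul_inv_rev, inv_inv]
    simp [mul_assoc, this, hs, hx0]
  rw [heq] at key
  exact Set.disjoint_left.mp (hUQ.closure_left hQ) key (interior_subset htV).2

end GroupWithZero

/-- If `S` is a Hausdorff topological semigroup (jointly continuous
associative multiplication), `z` is a right zero, `G = S \ {z}` is a subgroup, and
`S` is pseudocompact, then `z` is an isolated point of `S`. -/
theorem stmt_3 {S : Type*} [TopologicalSpace S] [T2Space S]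
    (mul : S → S → S)
    (assoc : ∀ a b c : S, mul (mul a b) c = mul a (mul b c))
    (contMul : Continuous fun p : S × S => mul p.1 p.2)
    (z : S) (hz : ∀ x : S, mul x z = z)
    (G : Set S) (hG : G = {x : S | x ≠ z})
    (hGmul : ∀ x ∈ G, ∀ y ∈ G, mul x y ∈ G)
    (e : S) (he : e ∈ G)
    (hidl : ∀ x ∈ G, mul e x = x) (hidr : ∀ x ∈ G, mul x e = x)
    (hinv : ∀ x ∈ G, ∃ y ∈ G, mul x y = e ∧ mul y x = e)
    (hpc : IsPseudocompact S) :
    IsOpen ({z} : Set S) := by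
  subst hG
  by_cases htriv : ∀ x : S, x ≠ z → x = e
  · have : Finite S := by
      refine Set.finite_univ_iff.mp ((Set.toFinite {z, e}).subset fun x _ => ?_)
      by_cases hxz : x = z
      · exact Or.inl hxz
      · exact Or.inr (htriv x hxz)
    exact isOpen_discrete _
  · push Not at htriv
    obtain ⟨g, hgz, hge⟩ := htriv
    -- If `z * x` were in the group, then `g * (z * x) = z * x` would give `g = e`.
    have hzl : ∀ x, mul z x = z := by
      intro x
      by_contra hne
      obtain ⟨w, _, hw, _⟩ := hinv (mul z x) hne
      have h1 : mul g (mul z x) = mul z x := by rw [← assoc, hz]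
      apply hge
      calc g = mul g e := (hidr g hgz).symm
        _ = mul (mul g (mul z x)) w := by rw [assoc, hw]
        _ = e := by rw [h1, hw]
    have hinv' : ∀ x, ∃ y, (x = z → y = z) ∧ (x ≠ z → mul x y = e) := by
      intro x
      by_cases hxz : x = z
      · exact ⟨z, fun _ => rfl, fun h => absurd hxz h⟩
      · obtain ⟨y, _, hy, _⟩ := hinv x hxz
        exact ⟨y, fun h => absurd h hxz, fun _ => hy⟩
    choose inv hinvz hinvm using hinv'
    let _ : GroupWithZero S :=
      { mul := mul
        mul_assoc := assoc
        one := e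
        one_mul := fun x => by
          by_cases hxz : x = z
          · exact hxz ▸ hz e
          · exact hidl x hxz
        mul_one := fun x => by
          by_cases hxz : x = z
          · exact hxz ▸ hzl e
          · exact hidr x hxz
        zero := z
        zero_mul := hzl
        mul_zero := hz
        inv := inv
        exists_pair_ne := ⟨e, z, he⟩
        inv_zero := hinvz z rfl
        mul_inv_cancel := hinvm }
    have : ContinuousMul S := ⟨contMul⟩
    exact isOpen_singleton_zero hpc
end

section
/- Let S be a Hausdorff topological space with a jointly continuous associative multiplication (a topological semigroup). Suppose 0 ∈ S satisfies x·0 = 0 for all x ∈ S, the set G = S ∖ {0} is closed under multiplication, and G is a group under the induced multiplication. If for every neighborhood U ⊆ G of the identity of G (in the subspace topology) there exists a finite set F ⊆ G with G = F·U⁻¹·U (where U⁻¹ = {u⁻¹ : u ∈ U}), then 0 is an isolated point of S. -/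
/-! If `0` were not isolated, pick disjoint open sets `V ∋ e` and `W ∋ 0`. Since `e·0 = 0`, there
are neighbourhoods `U ⊆ V ∩ G` of `e` and `W'` of `0` with `U·W' ⊆ W`. Take the finite `F` with
`G = F·U⁻¹·U`. Since `f⁻¹·0 = 0` for the finitely many `f ∈ F`, the set `N` of all `g` with
`f⁻¹·g ∈ W'` for every `f ∈ F` is an open neighbourhood of `0`. A nonzero `g ∈ N`, written as
`g = f·u⁻¹·v`, would give `v = u·(f⁻¹·g) ∈ U·W' ⊆ W`, contradicting `v ∈ V`. Hence `N = {0}`. -/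

/-- Let `S` be a Hausdorff topological semigroup, `z` a right zero,
`G = S \ {z}` a subgroup with inversion `inv`. If for every neighbourhood `U ⊆ G` of
the identity of `G` (in the subspace topology) there is a finite set `F ⊆ G` with
`G = F·U⁻¹·U`, then `z` is an isolated point of `S`. -/
theorem stmt_4 {S : Type*} [TopologicalSpace S] [T2Space S]
    (mul : S → S → S)
    (assoc : ∀ a b c : S, mul (mul a b) c = mul a (mul b c))
    (contMul : Continuous fun p : S × S => mul p.1 p.2)
    (z : S) (hz : ∀ x : S, mul x z = z)
    (G : Set S) (hG : G = {x : S | x ≠ z})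
    (hGmul : ∀ x ∈ G, ∀ y ∈ G, mul x y ∈ G)
    (e : S) (he : e ∈ G)
    (hidl : ∀ x ∈ G, mul e x = x) (hidr : ∀ x ∈ G, mul x e = x)
    (inv : S → S)
    (hinv : ∀ x ∈ G, inv x ∈ G ∧ mul x (inv x) = e ∧ mul (inv x) x = e)
    (hpre : ∀ U : Set S, U ⊆ G → U ∈ nhdsWithin e G →
      ∃ F : Set S, F ⊆ G ∧ F.Finite ∧
        ∀ g ∈ G, ∃ f ∈ F, ∃ u ∈ U, ∃ v ∈ U, g = mul f (mul (inv u) v)) :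
    IsOpen ({z} : Set S) := by
  have hez : e ≠ z := by simpa [hG] using he
  obtain ⟨V, W, hV, hW, heV, hzW, hVW⟩ := t2_separation hez
  have hmem : (fun p : S × S => mul p.1 p.2) ⁻¹' W ∈ nhds (e, z) :=
    contMul.continuousAt.preimage_mem_nhds (hW.mem_nhds (by simpa [hz] using hzW))
  obtain ⟨A, B, hA, heA, hB, hzB, hAB⟩ := mem_nhds_prod_iff'.1 hmem
  obtain ⟨F, hFG, hF, hcov⟩ := hpre (A ∩ V ∩ G) Set.inter_subset_right
    (Filter.inter_mem (mem_nhdsWithin_of_mem_nhds ((hA.inter hV).mem_nhds ⟨heA, heV⟩))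
      self_mem_nhdsWithin)
  have hN : IsOpen (⋂ f ∈ F, (fun g => mul (inv f) g) ⁻¹' B) :=
    hF.isOpen_biInter fun f _ =>
      hB.preimage (contMul.comp (continuous_const.prodMk continuous_id))
  convert hN using 1
  ext g
  simp only [Set.mem_singleton_iff, Set.mem_iInter, Set.mem_preimage]
  constructor
  · rintro rfl f _
    rwa [hz]
  · intro hg
    by_contra hgz
    obtain ⟨f, hf, u, hu, v, hv, hguv⟩ := hcov g (by simpa [hG] using hgz)
    have hfG := hFG hf
    have key : mul u (mul (inv f) g) = v := by
      rw [hguv, ← assoc (inv f), (hinv f hfG).2.2,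
        hidl _ (hGmul _ (hinv u hu.2).1 _ hv.2), ← assoc, (hinv u hu.2).2.1, hidl v hv.2]
    have hvW : mul u (mul (inv f) g) ∈ W :=
      hAB (Set.mk_mem_prod hu.1.1 (hg f hf))
    rw [key] at hvW
    exact Set.disjoint_left.1 hVW hv.1.2 hvW
end

section
/- Let {S_i}_{i∈I} be a family of monoids each having a zero 0_{S_i} with identity 1_{S_i} ≠ 0_{S_i}, let {Λ_i}_{i∈I} be nonempty index sets, and let S = ∑_{i∈I} B⁰_{Λ_i}(S_i) be the orthogonal sum of the Brandt Λ_i⁰-extensions, equipped with a Hausdorff topology for which the multiplication of S is separately continuous. Then for every non-zero element (α,g,β) ∈ (S_i)*_{α,β} ⊆ S there exists an open neighborhood U of (α,g,β) in S with U ⊆ (S_i)*_{α,β}; consequently every set (S_i)*_{α,β} is open in S. -/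
/-! A triple `(γ, s, δ)` survives left multiplication by the idempotent `(α, 1, α)` exactly when
it lies in the summand of `α` and `γ = α`; symmetrically on the right with `(β, 1, β)`. Hence
`(S_i)*_{α,β}` is the set of `x` with `(α,1,α)·x ≠ 0` and `x·(β,1,β) ≠ 0`. Points are closed in a
Hausdorff space, so this is an intersection of two preimages of the open set `{0}ᶜ` under
continuous translations. -/

/-- The underlying set of the orthogonal sum `∑_{i∈I} B⁰_{Λ i}(S i)` of the Brandt
`Λ i`⁰-extensions of the semigroups with zero `S i`: the element `none` is the zero,
and a non-zero element is a triple `(α, s, β)` with `s` a non-zero element of some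
`S i` and `α, β ∈ Λ i`. -/
abbrev OSumZ (I : Type u) (Λ : I → Type v) (S : I → Type w) [∀ i, Zero (S i)] :=
  Option (Σ i : I, Λ i × {s : S i // s ≠ 0} × Λ i)

open Classical in
/-- The multiplication of the orthogonal sum `∑_{i∈I} B⁰_{Λ i}(S i)`:
`(α,a,β)·(γ,b,δ) = (α,ab,δ)` if the two factors lie in the same summand `i`, `β = γ`
and `ab ≠ 0` in `S i`; all other products are the zero `none`. -/
noncomputable def osMulZ {I : Type u} {Λ : I → Type v} {S : I → Type w}
    [∀ i, SemigroupWithZero (S i)] :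
    OSumZ I Λ S → OSumZ I Λ S → OSumZ I Λ S
  | some ⟨i, α, a, β⟩, some ⟨j, γ, b, δ⟩ =>
      if h : i = j then
        match j, h, γ, b, δ with
        | _, rfl, γ, b, δ =>
          if β = γ then
            if hzero : a.1 * b.1 = 0 then none
            else some ⟨i, α, ⟨a.1 * b.1, hzero⟩, δ⟩
          else none
      else none
  | _, _ => none

/-- The subset `(S_i)*_{α,β} = {(α,s,β) : s ∈ S i, s ≠ 0}` of the orthogonal sum. -/
def osStar {I : Type u} (Λ : I → Type v) (S : I → Type w) [∀ i, Zero (S i)]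
    (i : I) (α β : Λ i) : Set (OSumZ I Λ S) :=
  {x | ∃ s : {s : S i // s ≠ 0}, x = some ⟨i, α, s, β⟩}

theorem osStar_eq_inter {I : Type u} {Λ : I → Type v} {S : I → Type w}
    [∀ i, MonoidWithZero (S i)] (hone : ∀ i, (1 : S i) ≠ 0) (i : I) (α β : Λ i) :
    osStar Λ S i α β =
      {x | osMulZ (some ⟨i, α, ⟨1, hone i⟩, α⟩) x ≠ none} ∩
        {x | osMulZ x (some ⟨i, β, ⟨1, hone i⟩, β⟩) ≠ none} := by
  ext x
  constructor
  · rintro ⟨s, rfl⟩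
    simp [osMulZ, s.2]
  · rintro ⟨hl, hr⟩
    rcases x with _ | ⟨j, γ, s, δ⟩
    · simp [osMulZ] at hl
    · by_cases hij : i = j
      · subst hij
        have hγ : α = γ := by
          by_contra h
          simp [osMulZ, h] at hl
        have hδ : δ = β := by
          by_contra h
          simp [osMulZ, h] at hr
        subst hγ hδ
        exact ⟨s, rfl⟩
      · simp [osMulZ, hij] at hl

/-- in a Hausdorff topology on the orthogonal sum
`S = ∑_{i∈I} B⁰_{Λ i}(S i)` of Brandt `Λ i`⁰-extensions of monoids with zero
(`1 ≠ 0`) for which multiplication is separately continuous, every non-zero element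
`(α,g,β)` has an open neighbourhood contained in `(S_i)*_{α,β}`; consequently every
set `(S_i)*_{α,β}` is open. -/
theorem stmt_5 {I : Type u} {Λ : I → Type v} {S : I → Type w}
    [∀ i, MonoidWithZero (S i)] (hone : ∀ i, (1 : S i) ≠ 0)
    [∀ i, Nonempty (Λ i)]
    [TopologicalSpace (OSumZ I Λ S)] [T2Space (OSumZ I Λ S)]
    (contL : ∀ a : OSumZ I Λ S, Continuous fun x => osMulZ a x)
    (contR : ∀ a : OSumZ I Λ S, Continuous fun x => osMulZ x a) :
    (∀ (i : I) (α β : Λ i) (g : {s : S i // s ≠ 0}),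
        ∃ U : Set (OSumZ I Λ S), IsOpen U ∧ some ⟨i, α, g, β⟩ ∈ U ∧
          U ⊆ osStar Λ S i α β) ∧
    (∀ (i : I) (α β : Λ i), IsOpen (osStar Λ S i α β)) := by
  have hopen : ∀ (i : I) (α β : Λ i), IsOpen (osStar Λ S i α β) := by
    intro i α β
    rw [osStar_eq_inter hone]
    exact (isOpen_compl_singleton.preimage (contL _)).inter
      (isOpen_compl_singleton.preimage (contR _))
  exact ⟨fun i α β g => ⟨_, hopen i α β, ⟨g, rfl⟩, subset_rfl⟩, hopen⟩
end

section
/- Let (S,τ_S) be a Hausdorff topological monoid with zero 0_S (identity 1_S ≠ 0_S, jointly continuous multiplication), let Λ be a nonempty index set, and let τ_B be a topology on the Brandt Λ⁰-extension B⁰_Λ(S) such that (B⁰_Λ(S),τ_B) is a Hausdorff topological semigroup and for some α ∈ Λ the natural map h_α : S → B⁰_Λ(S), defined by h_α(s) = (α,s,α) for s ≠ 0_S and h_α(0_S) = 0, is a homeomorphism of (S,τ_S) onto the subspace (S)_{α,α}. Then (B⁰_Λ(S),τ_B) is pseudocompact if and only if Λ is finite and (S,τ_S) is pseudocompact. -/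
/-!
Write `e_{γδ} = (γ, 1, δ)`. Joint continuity makes every map `x ↦ e_{aγ} x e_{δb}` continuous; it
carries the block `S_{γδ}` bijectively onto `S_{ab}` and everything outside it to `0`
(`bSand_some`, `bSand_ne_none`). In particular the nonzero part of each block is open, the space `S`
is a continuous image of `B⁰_Λ(S)`, and `B⁰_Λ(S)` is a union of `|Λ|²` continuous images of `S`.
Since pseudocompactness passes to continuous images and finite unions of them, this
settles everything except the finiteness of `Λ`.

For that (`finite_index`), choose a neighbourhood `G` of `e_{αα}` and a neighbourhood `V` of `0` with
`G·G` disjoint from `V·V`. Let `U_γ` and `U'_γ` be the open sets of those `(α, s, γ)`, respectively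
`(γ, s, α)`, with `(α, s, α) ∈ G`. Since `(α, s, γ)(γ, t, α) = (α, s, α)(α, t, α)`, the set `V`
cannot meet both `U_γ` and `U'_γ`. Hence `Λ` is covered by the `γ` with `U_γ ∩ V = ∅` and those with
`U'_γ ∩ V = ∅`. The sets of each kind that miss `V` form a locally finite family, because they lie
in distinct blocks and avoid a neighbourhood of `0`, so pseudocompactness makes each kind finite.
-/

/-- The underlying set of the Brandt `Λ`⁰-extension `B⁰_Λ(S)` of a semigroup `S` with
zero: `none` is the zero and a non-zero element is a triple `(α, s, β)` with `s` a
non-zero element of `S` and `α, β ∈ Λ`. -/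
abbrev BExtZ (Λ : Type u) (S : Type v) [Zero S] :=
  Option (Λ × {s : S // s ≠ 0} × Λ)

open Classical in
/-- The multiplication of the Brandt `Λ`⁰-extension `B⁰_Λ(S)`:
`(α,a,β)·(γ,b,δ) = (α,ab,δ)` if `β = γ` and `ab ≠ 0`, and `= 0` otherwise; `0` is a
two-sided zero. -/
noncomputable def bMulZ {Λ : Type u} {S : Type v} [SemigroupWithZero S] :
    BExtZ Λ S → BExtZ Λ S → BExtZ Λ S
  | some (α, a, β), some (γ, b, δ) =>
      if β = γ then
        if hzero : a.1 * b.1 = 0 then none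
        else some (α, ⟨a.1 * b.1, hzero⟩, δ)
      else none
  | _, _ => none

open Classical in
/-- The natural map `h_α : S → B⁰_Λ(S)` sending `0` to the zero and a non-zero `s` to
`(α, s, α)`; its image is the subset `(S)_{α,α}`. -/
noncomputable def bNat {Λ : Type u} {S : Type v} [Zero S] (α : Λ) (s : S) :
    BExtZ Λ S :=
  if h : s = 0 then none else some (α, ⟨s, h⟩, α)

open Topology Set

/-- Pseudocompactness for indexed families: local finiteness bounds repetitions as well. -/
theorem IsPseudocompact.finite_of_locallyFinite {X ι : Type*} [TopologicalSpace X]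
    (hX : IsPseudocompact X) (f : ι → Set X) (ho : ∀ i, IsOpen (f i))
    (hne : ∀ i, (f i).Nonempty) (hf : LocallyFinite f) : Finite ι := by
  have hr : (range f).Finite := by
    refine hX _ ?_ hf.on_range
    rintro _ ⟨i, rfl⟩
    exact ⟨ho i, hne i⟩
  rw [← Set.finite_univ_iff]
  refine Set.Finite.of_finite_fibers f (by simpa using hr) ?_
  rintro U ⟨i, -, rfl⟩
  obtain ⟨x, hx⟩ := hne i
  refine (hf.point_finite x).subset ?_
  rintro j ⟨-, hj⟩
  have hj' : f j = f i := hj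
  simpa [hj'] using hx

theorem IsPseudocompact.of_surjective {X Y : Type*} [TopologicalSpace X] [TopologicalSpace Y]
    (hX : IsPseudocompact X) (r : X → Y) (hr : Continuous r) (hs : Function.Surjective r) :
    IsPseudocompact Y := by
  intro 𝒰 h𝒰 hlf
  have := hX.finite_of_locallyFinite (fun U : 𝒰 => r ⁻¹' (U : Set Y))
    (fun U => (h𝒰 U U.2).1.preimage hr) (fun U => (h𝒰 U U.2).2.preimage hs)
    (hlf.preimage_continuous hr)
  exact Set.toFinite 𝒰

theorem IsPseudocompact.of_finite_cover {X Y ι : Type*} [TopologicalSpace X] [TopologicalSpace Y]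
    [Finite ι] (hX : IsPseudocompact X) (r : ι → X → Y) (hr : ∀ i, Continuous (r i))
    (hs : ∀ y, ∃ i x, r i x = y) : IsPseudocompact Y := by
  intro 𝒰 h𝒰 hlf
  have hfin : ∀ i, {U : 𝒰 | (r i ⁻¹' (U : Set Y)).Nonempty}.Finite := by
    intro i
    have := hX.finite_of_locallyFinite
      (fun U : {U : 𝒰 | (r i ⁻¹' (U : Set Y)).Nonempty} => r i ⁻¹' ((U : 𝒰) : Set Y))
      (fun U => (h𝒰 _ U.1.2).1.preimage (hr i)) (fun U => U.2)
      ((hlf.preimage_continuous (hr i)).comp_injective Subtype.val_injective)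
    exact Set.toFinite _
  have huniv : (univ : Set 𝒰).Finite := by
    refine (Set.finite_iUnion hfin).subset ?_
    intro U _
    obtain ⟨y, hy⟩ := (h𝒰 U U.2).2
    obtain ⟨i, x, rfl⟩ := hs y
    exact mem_iUnion.2 ⟨i, x, hy⟩
  have := Set.finite_univ_iff.1 huniv
  exact Set.toFinite 𝒰

section Brandt

variable {Λ : Type*} {S : Type*} [MonoidWithZero S]

/-- The matrix unit `e_{γδ} = (γ, 1, δ)`. -/
def bUnit (hone : (1 : S) ≠ 0) (γ δ : Λ) : BExtZ Λ S := some (γ, ⟨1, hone⟩, δ)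

/-- The map `x ↦ e_{aγ} x e_{δb}`, which moves the block `S_{γδ}` to `S_{ab}` and kills every
other block. -/
noncomputable def bSand (hone : (1 : S) ≠ 0) (a γ δ b : Λ) (x : BExtZ Λ S) : BExtZ Λ S :=
  bMulZ (bMulZ (bUnit hone a γ) x) (bUnit hone δ b)

theorem bSand_none (hone : (1 : S) ≠ 0) (a γ δ b : Λ) : bSand hone a γ δ b none = none := rfl

theorem bSand_some (hone : (1 : S) ≠ 0) (a γ δ b : Λ) (s : {s : S // s ≠ 0}) :
    bSand hone a γ δ b (some (γ, s, δ)) = some (a, s, b) := by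
  simp [bSand, bUnit, bMulZ, s.2]

theorem bSand_ne_none (hone : (1 : S) ≠ 0) {a γ δ b : Λ} {x : BExtZ Λ S}
    (h : bSand hone a γ δ b x ≠ none) : ∃ s, x = some (γ, s, δ) := by
  rcases x with _ | ⟨c, s, d⟩
  · exact absurd rfl h
  · by_cases hc : γ = c
    · by_cases hd : d = δ
      · subst hc hd
        exact ⟨s, rfl⟩
      · exact absurd (by simp [bSand, bUnit, bMulZ, s.2, hc, hd]) h
    · exact absurd (by simp [bSand, bUnit, bMulZ, hc]) h

theorem continuous_bSand [TopologicalSpace (BExtZ Λ S)]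
    (contMul : Continuous fun p : BExtZ Λ S × BExtZ Λ S => bMulZ p.1 p.2)
    (hone : (1 : S) ≠ 0) (a γ δ b : Λ) :
    Continuous (bSand hone a γ δ b : BExtZ Λ S → BExtZ Λ S) := by
  have h1 : Continuous fun x : BExtZ Λ S => bMulZ (bUnit hone a γ) x :=
    contMul.comp (continuous_const.prodMk continuous_id)
  exact contMul.comp (h1.prodMk continuous_const)

/-- A family of sets of nonzero elements lying in distinct blocks and missing a neighbourhood of
`0` is locally finite. -/
theorem locallyFinite_blocks [TopologicalSpace (BExtZ Λ S)] [T2Space (BExtZ Λ S)]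
    (contMul : Continuous fun p : BExtZ Λ S × BExtZ Λ S => bMulZ p.1 p.2)
    (hone : (1 : S) ≠ 0) {ι : Type*} (f : ι → Set (BExtZ Λ S)) (p : ι → Λ × Λ)
    (hp : Function.Injective p)
    (hf : ∀ i, ∀ x ∈ f i, ∃ s, x = some ((p i).1, s, (p i).2))
    (V : Set (BExtZ Λ S)) (hV : V ∈ 𝓝 none) (hd : ∀ i, ∀ x ∈ f i, x ∉ V) :
    LocallyFinite f := by
  rintro (_ | ⟨a, s, b⟩)
  · refine ⟨V, hV, Set.finite_empty.subset ?_⟩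
    rintro i ⟨x, hx, hxV⟩
    exact hd i x hx hxV
  · refine ⟨bSand hone a a b b ⁻¹' {none}ᶜ, ?_, ?_⟩
    · refine (isOpen_compl_singleton.preimage (continuous_bSand contMul hone a a b b)).mem_nhds ?_
      simp [bSand_some]
    · refine Set.Subsingleton.finite ?_
      have key : ∀ i, (f i ∩ bSand hone a a b b ⁻¹' {none}ᶜ).Nonempty → p i = (a, b) := by
        rintro i ⟨x, hx, hx2⟩
        obtain ⟨t, rfl⟩ := bSand_ne_none hone hx2
        obtain ⟨t', ht'⟩ := hf i _ hx
        simp only [Option.some.injEq, Prod.mk.injEq] at ht'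
        exact Prod.ext ht'.1.symm ht'.2.2.symm
      intro i hi j hj
      exact hp ((key i hi).trans (key j hj).symm)

theorem finite_index [TopologicalSpace (BExtZ Λ S)] [T2Space (BExtZ Λ S)]
    (contMul : Continuous fun p : BExtZ Λ S × BExtZ Λ S => bMulZ p.1 p.2)
    (hone : (1 : S) ≠ 0) (α : Λ) (hB : IsPseudocompact (BExtZ Λ S)) : Finite Λ := by
  have hee : bMulZ (bUnit hone α α) (bUnit hone α α) = bUnit hone α α := by
    simp [bUnit, bMulZ, hone]
  obtain ⟨P, N, hP, hN, heP, hzN, hPN⟩ :=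
    t2_separation (show bUnit (Λ := Λ) hone α α ≠ none by simp [bUnit])
  have hG : (fun p : BExtZ Λ S × BExtZ Λ S => bMulZ p.1 p.2) ⁻¹' P
      ∈ 𝓝 (bUnit hone α α, bUnit hone α α) :=
    (hP.preimage contMul).mem_nhds (by simpa [hee] using heP)
  have hV : (fun p : BExtZ Λ S × BExtZ Λ S => bMulZ p.1 p.2) ⁻¹' N ∈ 𝓝 (none, none) :=
    (hN.preimage contMul).mem_nhds hzN
  rw [nhds_prod_eq, Filter.mem_prod_same_iff] at hG hV
  obtain ⟨G', hG', hGP⟩ := hG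
  obtain ⟨V, hV, hVN⟩ := hV
  obtain ⟨G, hGG', hGo, heG⟩ := mem_nhds_iff.1 hG'
  have hGP' : ∀ x ∈ G, ∀ y ∈ G, bMulZ x y ∈ P := fun x hx y hy =>
    hGP (Set.mk_mem_prod (hGG' hx) (hGG' hy))
  have hVN' : ∀ x ∈ V, ∀ y ∈ V, bMulZ x y ∈ N := fun x hx y hy =>
    hVN (Set.mk_mem_prod hx hy)
  have hzG : none ∉ G := fun h => Set.disjoint_left.1 hPN (hGP' _ h _ h) hzN
  -- `T a b` consists of the elements `(a, s, b)` with `(α, s, α) ∈ G`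
  let T : Λ → Λ → Set (BExtZ Λ S) := fun a b => bSand hone α a b α ⁻¹' G
  have hTo : ∀ a b, IsOpen (T a b) := fun a b =>
    hGo.preimage (continuous_bSand contMul hone α a b α)
  have hTne : ∀ a b, (T a b).Nonempty := fun a b =>
    ⟨bUnit hone a b, by
      change bSand hone α a b α (some _) ∈ G
      rw [bSand_some]; exact heG⟩
  have hTb : ∀ a b, ∀ x ∈ T a b, ∃ s, x = some (a, s, b) := fun a b x hx =>
    bSand_ne_none hone (fun h => hzG (h ▸ hx))
  have hfin : ∀ p : Λ → Λ × Λ, Function.Injective p →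
      {γ | ∀ x ∈ T (p γ).1 (p γ).2, x ∉ V}.Finite := by
    intro p hp
    have := hB.finite_of_locallyFinite
      (fun γ : {γ | ∀ x ∈ T (p γ).1 (p γ).2, x ∉ V} => T (p γ).1 (p γ).2)
      (fun _ => hTo _ _) (fun _ => hTne _ _)
      (locallyFinite_blocks contMul hone _ (fun γ => p γ) (hp.comp Subtype.val_injective)
        (fun _ => hTb _ _) V hV (fun γ => γ.2))
    exact Set.toFinite _
  rw [← Set.finite_univ_iff]
  refine ((hfin (fun γ => (α, γ)) fun _ _ h => (Prod.mk.inj h).2).union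
    (hfin (fun γ => (γ, α)) fun _ _ h => (Prod.mk.inj h).1)).subset ?_
  intro γ _
  by_contra hcon
  simp only [mem_union, mem_ofPred_eq, not_or, not_forall, not_not] at hcon
  obtain ⟨⟨x, hx, hxV⟩, ⟨y, hy, hyV⟩⟩ := hcon
  obtain ⟨s, rfl⟩ := hTb _ _ _ hx
  obtain ⟨t, rfl⟩ := hTb _ _ _ hy
  have hx' : some (α, s, α) ∈ G := by rw [← bSand_some hone α α γ α s]; exact hx
  have hy' : some (α, t, α) ∈ G := by rw [← bSand_some hone α γ α α t]; exact hy
  have hprod : bMulZ (some (α, s, γ)) (some (γ, t, α))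
      = bMulZ (some (α, s, α)) (some (α, t, α)) := by simp [bMulZ]
  exact Set.disjoint_left.1 hPN (hGP' _ hx' _ hy') (hprod ▸ hVN' _ hxV _ hyV)

end Brandt

/-- Let `(S,τ_S)` be a Hausdorff topological monoid with zero
(`1 ≠ 0`), and let the Brandt `Λ`⁰-extension `B⁰_Λ(S)` carry a Hausdorff topology
with jointly continuous multiplication such that for some `α ∈ Λ` the natural map
`h_α : S → B⁰_Λ(S)` is a homeomorphism onto the subspace `(S)_{α,α}` (that is, a
topological embedding).  Then `B⁰_Λ(S)` is pseudocompact if and only if `Λ` is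
finite and `S` is pseudocompact. -/
theorem stmt_11 {Λ : Type u} {S : Type v} [Nonempty Λ] [MonoidWithZero S]
    (hone : (1 : S) ≠ 0)
    [TopologicalSpace S] [T2Space S]
    (contMulS : Continuous fun p : S × S => p.1 * p.2)
    [TopologicalSpace (BExtZ Λ S)] [T2Space (BExtZ Λ S)]
    (contMul : Continuous fun p : BExtZ Λ S × BExtZ Λ S => bMulZ p.1 p.2)
    (α : Λ) (hembed : Topology.IsEmbedding (bNat (Λ := Λ) (S := S) α)) :
    IsPseudocompact (BExtZ Λ S) ↔ (Finite Λ ∧ IsPseudocompact S) := by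
  have hnat : ∀ s : {s : S // s ≠ 0}, bNat α s.1 = some (α, s, α) := fun s => by
    simp [bNat, s.2]
  constructor
  · intro hB
    refine ⟨finite_index contMul hone α hB, ?_⟩
    have hrange : ∀ x : BExtZ Λ S, ∃ s : S, bNat α s = bSand hone α α α α x := by
      intro x
      by_cases h : bSand hone α α α α x = none
      · exact ⟨0, by simp [bNat, h]⟩
      · obtain ⟨s, rfl⟩ := bSand_ne_none hone h
        exact ⟨s, by rw [hnat, bSand_some]⟩
    choose r hr using hrange
    refine hB.of_surjective r ?_ ?_
    · rw [hembed.continuous_iff]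
      exact (continuous_bSand contMul hone α α α α).congr fun x => (hr x).symm
    · intro s
      refine ⟨bNat α s, hembed.injective ?_⟩
      rw [hr]
      by_cases h : s = 0
      · simp [bNat, h, bSand_none]
      · rw [hnat ⟨s, h⟩, bSand_some]
  · rintro ⟨hΛ, hS⟩
    refine hS.of_finite_cover
      (fun (p : Λ × Λ) s => bSand hone p.1 α α p.2 (bNat α s))
      (fun p => (continuous_bSand contMul hone _ _ _ _).comp hembed.continuous) ?_
    rintro (_ | ⟨a, s, b⟩)
    · exact ⟨(α, α), 0, by simp [bNat, bSand_none]⟩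
    · exact ⟨(a, b), s, by simp only [hnat, bSand_some]⟩
end

section
/- Let (S,τ_S) be a Hausdorff topological monoid with zero 0_S (identity 1_S ≠ 0_S, jointly continuous multiplication) which is an inverse semigroup (for every x ∈ S there is a unique x⁻¹ ∈ S with x·x⁻¹·x = x and x⁻¹·x·x⁻¹ = x⁻¹) whose inversion map x ↦ x⁻¹ is continuous. Let Λ be a nonempty index set and let τ_B be a topology on the Brandt Λ⁰-extension B⁰_Λ(S) such that (B⁰_Λ(S),τ_B) is a Hausdorff topological semigroup and for some α ∈ Λ the natural map h_α : S → B⁰_Λ(S), h_α(s) = (α,s,α) for s ≠ 0_S and h_α(0_S) = 0, is a homeomorphism of (S,τ_S) onto the subspace (S)_{α,α}. If (B⁰_Λ(S),τ_B) is pseudocompact, then B⁰_Λ(S) is an inverse semigroup and its inversion map, given by 0 ↦ 0 and (α,a,β) ↦ (β,a⁻¹,α), is continuous with respect to τ_B. -/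
open Classical in
/-- The inversion map of the Brandt `Λ`⁰-extension `B⁰_Λ(S)` induced by an inversion
`inv` on `S`: `0 ↦ 0` and `(α,a,β) ↦ (β,a⁻¹,α)`.  (If `inv` maps non-zero elements to
non-zero elements, as is the case for the inversion of an inverse monoid with zero,
the dite-branch producing `none` never occurs.) -/
noncomputable def bInvZ {Λ : Type u} {S : Type v} [Zero S] (inv : S → S) :
    BExtZ Λ S → BExtZ Λ S
  | some (α, a, β) =>
      if h : inv a.1 = 0 then none else some (β, ⟨inv a.1, h⟩, α)
  | none => none

namespace Brandt

open Topology Set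

variable {Λ : Type u} {S : Type v}

open Classical in
/-- The map `S → B⁰_Λ(S)`, `s ↦ (γ, s, δ)` and `0 ↦ 0`, whose range is `(S)_{γ,δ}`. -/
noncomputable def h [Zero S] (γ δ : Λ) (s : S) : BExtZ Λ S :=
  if hs : s = 0 then none else some (γ, ⟨s, hs⟩, δ)

lemma h_zero [Zero S] (γ δ : Λ) : h γ δ (0 : S) = none := by simp [h]

lemma some_eq_h [Zero S] (γ δ : Λ) (a : {s : S // s ≠ 0}) : some (γ, a, δ) = h γ δ a.1 := by
  simp [h, a.2]

lemma h_inj [Zero S] {γ δ : Λ} {s t : S} (hst : h γ δ s = h γ δ t) : s = t := by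
  unfold h at hst
  split_ifs at hst <;> simp_all

lemma h_eq_none [Zero S] {γ δ : Λ} {s : S} : h γ δ s = none ↔ s = 0 := by
  simp [h]

lemma exists_h [Zero S] (x : BExtZ Λ S) : x = none ∨ ∃ γ δ, ∃ s : S, s ≠ 0 ∧ x = h γ δ s := by
  rcases x with _ | ⟨γ, a, δ⟩
  · exact Or.inl rfl
  · exact Or.inr ⟨γ, δ, a.1, a.2, some_eq_h _ _ _⟩

section Algebra

variable [MonoidWithZero S]

lemma none_mul (x : BExtZ Λ S) : bMulZ none x = none := by
  cases x <;> rfl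

lemma mul_none (x : BExtZ Λ S) : bMulZ x none = none := by
  rcases x with _ | ⟨γ, a, δ⟩ <;> rfl

lemma h_mul_h (γ β δ : Λ) (s t : S) : bMulZ (h γ β s) (h β δ t) = h γ δ (s * t) := by
  by_cases hs : s = 0
  · subst hs; simp [h_zero, none_mul]
  by_cases ht : t = 0
  · subst ht; simp [h_zero, mul_none]
  simp [h, hs, ht, bMulZ]

lemma h_mul_h_of_ne {β β' : Λ} (hb : β ≠ β') (γ δ : Λ) (s t : S) :
    bMulZ (h γ β s) (h β' δ t) = none := by
  by_cases hs : s = 0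
  · subst hs; simp [h_zero, none_mul]
  by_cases ht : t = 0
  · subst ht; simp [h_zero, mul_none]
  simp [h, hs, ht, bMulZ, hb]

/-- The projection of `B⁰_Λ(S)` onto `(S)_{γ,δ}`, multiplication by `(γ,1,γ)` on the left and by
`(δ,1,δ)` on the right. -/
noncomputable def proj (γ δ : Λ) (x : BExtZ Λ S) : BExtZ Λ S :=
  bMulZ (bMulZ (h γ γ 1) x) (h δ δ 1)

lemma proj_none (γ δ : Λ) : proj γ δ (none : BExtZ Λ S) = none := by
  simp [proj, none_mul, mul_none]

lemma proj_h (γ δ : Λ) (s : S) : proj γ δ (h γ δ s) = h γ δ s := by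
  simp [proj, h_mul_h]

lemma proj_h_of_ne {γ δ γ' δ' : Λ} (s : S) (hne : (γ, δ) ≠ (γ', δ')) :
    proj γ δ (h γ' δ' s) = none := by
  unfold proj
  by_cases h1 : γ = γ'
  · subst h1
    have h2 : δ' ≠ δ := fun hd => hne (by rw [hd])
    rw [h_mul_h, h_mul_h_of_ne h2]
  · rw [h_mul_h_of_ne h1, none_mul]

lemma proj_ne_none {γ δ γ' δ' : Λ} {x : BExtZ Λ S} (h1 : proj γ δ x ≠ none)
    (h2 : proj γ' δ' x ≠ none) : (γ, δ) = (γ', δ') := by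
  rcases exists_h x with rfl | ⟨ε, ζ, s, -, rfl⟩
  · exact absurd (proj_none _ _) h1
  · have e1 := not_imp_comm.1 (proj_h_of_ne (γ := γ) (δ := δ) (γ' := ε) (δ' := ζ) s) h1
    have e2 := not_imp_comm.1 (proj_h_of_ne (γ := γ') (δ := δ') (γ' := ε) (δ' := ζ) s) h2
    exact e1.trans e2.symm

lemma range_h (γ δ : Λ) : range (h γ δ : S → BExtZ Λ S) = {x | proj γ δ x = x} := by
  ext x
  constructor
  · rintro ⟨s, rfl⟩
    exact proj_h γ δ s
  · intro hx
    rcases exists_h x with rfl | ⟨ε, ζ, s, hs, rfl⟩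
    · exact ⟨0, h_zero _ _⟩
    · by_cases hne : (γ, δ) = (ε, ζ)
      · obtain ⟨rfl, rfl⟩ := Prod.mk.inj hne
        exact ⟨s, rfl⟩
      · have hx' : proj γ δ (h ε ζ s) = h ε ζ s := hx
        rw [proj_h_of_ne s hne] at hx'
        exact absurd (h_eq_none.1 hx'.symm) hs

lemma inv_zero {inv : S → S} (hinv : ∀ x : S, x * inv x * x = x ∧ inv x * x * inv x = inv x) :
    inv 0 = 0 := by
  simpa using (hinv 0).2.symm

lemma bInvZ_h {inv : S → S} (h0 : inv 0 = 0) (γ δ : Λ) (s : S) :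
    bInvZ inv (h γ δ s) = h δ γ (inv s) := by
  by_cases hs : s = 0
  · subst hs; simp [h_zero, h0, bInvZ]
  · simp [h, hs, bInvZ]

theorem existsUnique_inverse (inv : S → S)
    (hinv : ∀ x : S, x * inv x * x = x ∧ inv x * x * inv x = inv x)
    (hinvu : ∀ x y : S, x * y * x = x → y * x * y = y → y = inv x) (x : BExtZ Λ S) :
    ∃! y : BExtZ Λ S, bMulZ (bMulZ x y) x = x ∧ bMulZ (bMulZ y x) y = y := by
  rcases exists_h x with rfl | ⟨γ, δ, s, hs, rfl⟩
  · refine ⟨none, ⟨rfl, rfl⟩, fun y hy => ?_⟩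
    rw [← hy.2, mul_none, none_mul]
  · refine ⟨h δ γ (inv s), ⟨?_, ?_⟩, ?_⟩
    · rw [h_mul_h, h_mul_h, (hinv s).1]
    · rw [h_mul_h, h_mul_h, (hinv s).2]
    · rintro y ⟨h1, h2⟩
      have hx : (h γ δ s : BExtZ Λ S) ≠ none := fun hn => hs (h_eq_none.1 hn)
      rcases exists_h y with rfl | ⟨ε, ζ, t, -, rfl⟩
      · rw [mul_none, none_mul] at h1
        exact absurd h1.symm hx
      by_cases hε : δ = ε
      swap
      · rw [h_mul_h_of_ne hε, none_mul] at h1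
        exact absurd h1.symm hx
      subst hε
      rw [h_mul_h] at h1
      by_cases hζ : ζ = γ
      swap
      · rw [h_mul_h_of_ne hζ] at h1
        exact absurd h1.symm hx
      subst hζ
      rw [h_mul_h] at h1
      rw [h_mul_h, h_mul_h] at h2
      rw [hinvu s t (h_inj h1) (h_inj h2)]

end Algebra

section Topology

variable [MonoidWithZero S] [TopologicalSpace (BExtZ Λ S)]

lemma continuous_proj (contMul : Continuous fun p : BExtZ Λ S × BExtZ Λ S => bMulZ p.1 p.2)
    (a b : BExtZ Λ S) : Continuous fun x => bMulZ (bMulZ a x) b := by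
  have h1 : Continuous fun x => bMulZ a x := contMul.comp (continuous_const.prodMk continuous_id)
  exact contMul.comp (h1.prodMk continuous_const)

lemma isEmbedding_h [TopologicalSpace S]
    (contMul : Continuous fun p : BExtZ Λ S × BExtZ Λ S => bMulZ p.1 p.2)
    {α : Λ} (hembed : IsEmbedding (bNat (Λ := Λ) (S := S) α)) (γ δ : Λ) :
    IsEmbedding (h γ δ : S → BExtZ Λ S) := by
  have hb : bNat (Λ := Λ) (S := S) α = h α α := rfl
  rw [hb] at hembed
  -- `h γ δ` and `h α α` are translates of each other by matrix units.
  have hc : Continuous (h γ δ : S → BExtZ Λ S) := by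
    have := (continuous_proj contMul (h γ α 1) (h α δ 1)).comp hembed.continuous
    convert this using 1
    ext1 s
    simp [h_mul_h]
  refine IsEmbedding.of_comp hc (continuous_proj contMul (h α γ 1) (h δ α 1)) ?_
  convert hembed using 1
  ext1 s
  simp [h_mul_h]

variable [T2Space (BExtZ Λ S)]

/-- In a pseudocompact `B⁰_Λ(S)`, all but finitely many of the `(γ, 1, δ)` lie in the closure of
any given open neighbourhood of the zero. -/
lemma finite_notMem_closure (hone : (1 : S) ≠ 0)
    (contMul : Continuous fun p : BExtZ Λ S × BExtZ Λ S => bMulZ p.1 p.2)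
    (hpc : IsPseudocompact (BExtZ Λ S)) {W : Set (BExtZ Λ S)} (hW : IsOpen W)
    (h0 : none ∈ W) :
    {p : Λ × Λ | (h p.1 p.2 (1 : S) : BExtZ Λ S) ∉ closure W}.Finite := by
  set P : Set (Λ × Λ) := {p : Λ × Λ | (h p.1 p.2 (1 : S) : BExtZ Λ S) ∉ closure W} with hP
  let N : Λ × Λ → Set (BExtZ Λ S) := fun p => {x | proj p.1 p.2 x ≠ none}
  have hN : ∀ p, IsOpen (N p) := fun p =>
    isOpen_compl_singleton.preimage (continuous_proj contMul _ _)
  let U : Λ × Λ → Set (BExtZ Λ S) := fun p => N p \ closure W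
  have hmem : ∀ p ∈ P, h p.1 p.2 (1 : S) ∈ U p := by
    intro p hp
    refine ⟨?_, hp⟩
    change proj p.1 p.2 (h p.1 p.2 1) ≠ none
    rw [proj_h]
    exact fun hn => hone (h_eq_none.1 hn)
  have hinj : InjOn U P := by
    intro p hp q hq hpq
    have h1 := hmem p hp
    have h2 : h p.1 p.2 (1 : S) ∈ U q := hpq ▸ h1
    exact proj_ne_none h1.1 h2.1
  refine Finite.of_finite_image (hpc (U '' P) ?_ ?_) hinj
  · rintro _ ⟨p, hp, rfl⟩
    exact ⟨(hN p).sdiff isClosed_closure, _, hmem p hp⟩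
  · intro x
    rcases exists_h x with rfl | ⟨γ, δ, s, hs, rfl⟩
    · refine ⟨W, hW.mem_nhds h0, ?_⟩
      convert finite_empty
      rw [eq_empty_iff_forall_notMem]
      rintro ⟨_, p, hp, rfl⟩ ⟨y, hy, hyW⟩
      exact hy.2 (subset_closure hyW)
    · refine ⟨N (γ, δ), (hN _).mem_nhds ?_, ?_⟩
      · change proj γ δ (h γ δ s) ≠ none
        rw [proj_h]
        exact fun hn => hs (h_eq_none.1 hn)
      · refine Subsingleton.finite ?_
        rintro ⟨_, p, hp, rfl⟩ ⟨y, hy, hyN⟩ ⟨_, q, hq, rfl⟩ ⟨z, hz, hzN⟩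
        have e1 : p = (γ, δ) := proj_ne_none hy.1 hyN
        have e2 : q = (γ, δ) := proj_ne_none hz.1 hzN
        simp [e1, e2]

theorem finite_index (hone : (1 : S) ≠ 0)
    (contMul : Continuous fun p : BExtZ Λ S × BExtZ Λ S => bMulZ p.1 p.2)
    (hpc : IsPseudocompact (BExtZ Λ S)) (α : Λ) : Finite Λ := by
  by_contra hfin
  rw [not_finite_iff_infinite] at hfin
  have hne : (h α α (1 : S) : BExtZ Λ S) ≠ none := fun hn => hone (h_eq_none.1 hn)
  obtain ⟨A, V, hA, hV, hαA, h0V, hAV⟩ := t2_separation hne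
  have hnhds : (fun p : BExtZ Λ S × BExtZ Λ S => bMulZ p.1 p.2) ⁻¹' V ∈
      𝓝 ((none, none) : BExtZ Λ S × BExtZ Λ S) :=
    (hV.preimage contMul).mem_nhds h0V
  obtain ⟨W, hW, h0W, hWV⟩ := exists_nhds_square hnhds
  have hfinP := finite_notMem_closure hone contMul hpc hW h0W
  obtain ⟨β, hβ⟩ := ((hfinP.image Prod.fst).union (hfinP.image Prod.snd)).exists_notMem
  have h1 : (h α β (1 : S) : BExtZ Λ S) ∈ closure W := by
    by_contra hn
    exact hβ (Or.inr ⟨(α, β), hn, rfl⟩)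
  have h2 : (h β α (1 : S) : BExtZ Λ S) ∈ closure W := by
    by_contra hn
    exact hβ (Or.inl ⟨(β, α), hn, rfl⟩)
  have h3 : (h α α (1 : S) : BExtZ Λ S) ∈ closure V := by
    have := map_mem_closure₂ (u := V) (f := fun x y : BExtZ Λ S => bMulZ x y) contMul h1 h2
      (fun a ha b hb => hWV (mk_mem_prod ha hb))
    simpa [h_mul_h] using this
  exact disjoint_left.1 (hAV.closure_right hA) hαA h3

theorem continuous_bInvZ [Finite Λ] [TopologicalSpace S] {inv : S → S} (h0 : inv 0 = 0)
    (continv : Continuous inv)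
    (contMul : Continuous fun p : BExtZ Λ S × BExtZ Λ S => bMulZ p.1 p.2)
    {α : Λ} (hembed : IsEmbedding (bNat (Λ := Λ) (S := S) α)) :
    Continuous (bInvZ (Λ := Λ) inv) := by
  refine (locallyFinite_of_finite
    fun p : Λ × Λ => range (h p.1 p.2 : S → BExtZ Λ S)).continuous ?_ ?_ ?_
  · rw [eq_univ_iff_forall]
    intro x
    rw [mem_iUnion]
    rcases exists_h x with rfl | ⟨γ, δ, s, -, rfl⟩
    · exact ⟨(α, α), 0, h_zero _ _⟩
    · exact ⟨(γ, δ), s, rfl⟩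
  · intro p
    rw [range_h]
    exact isClosed_eq (continuous_proj contMul _ _) continuous_id
  · rintro ⟨γ, δ⟩
    have he := isEmbedding_h contMul hembed γ δ
    rw [continuousOn_iff_continuous_domRestrict, ← he.toHomeomorph.comp_continuous_iff']
    convert (isEmbedding_h contMul hembed δ γ).continuous.comp continv using 1
    ext1 s
    exact bInvZ_h h0 γ δ s

end Topology

end Brandt

/-- Let `(S,τ_S)` be a Hausdorff topological monoid with zero
(`1 ≠ 0`) which is an inverse semigroup (with inversion `inv`, continuous), and let
the Brandt `Λ`⁰-extension `B⁰_Λ(S)` carry a Hausdorff topology with jointly continuous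
multiplication such that for some `α ∈ Λ` the natural map `h_α : S → B⁰_Λ(S)` is a
homeomorphism onto the subspace `(S)_{α,α}`.  If `B⁰_Λ(S)` is pseudocompact, then
`B⁰_Λ(S)` is an inverse semigroup and its inversion map `0 ↦ 0`,
`(α,a,β) ↦ (β,a⁻¹,α)` is continuous. -/
theorem stmt_12 {Λ : Type u} {S : Type v} [Nonempty Λ] [MonoidWithZero S]
    (hone : (1 : S) ≠ 0)
    [TopologicalSpace S] [T2Space S]
    (contMulS : Continuous fun p : S × S => p.1 * p.2)
    (inv : S → S) (continv : Continuous inv)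
    (hinv : ∀ x : S, x * inv x * x = x ∧ inv x * x * inv x = inv x)
    (hinvu : ∀ x y : S, x * y * x = x → y * x * y = y → y = inv x)
    [TopologicalSpace (BExtZ Λ S)] [T2Space (BExtZ Λ S)]
    (contMul : Continuous fun p : BExtZ Λ S × BExtZ Λ S => bMulZ p.1 p.2)
    (α : Λ) (hembed : Topology.IsEmbedding (bNat (Λ := Λ) (S := S) α))
    (hpc : IsPseudocompact (BExtZ Λ S)) :
    (∀ x : BExtZ Λ S, ∃! y : BExtZ Λ S,
        bMulZ (bMulZ x y) x = x ∧ bMulZ (bMulZ y x) y = y) ∧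
    Continuous (bInvZ (Λ := Λ) inv) := by
  have : Finite Λ := Brandt.finite_index hone contMul hpc α
  exact ⟨Brandt.existsUnique_inverse inv hinv hinvu,
    Brandt.continuous_bInvZ (Brandt.inv_zero hinv) continv contMul hembed⟩
end
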